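/- arXiv:2304.04373 — 3 statements merged into one kernel-verified Lean document; each statement's English description precedes it below -/
import Mathlib

section
/- Let -∞ < a < b < ∞, let μ and w be weights on [a,b], let ν be a nonnegative finite Borel measure on [a,b] with ν[a,b] > 0, and let Φ be a Young function. Define K_{1,Φ}(μ,ν,w) := (1/ν[a,b]) · sup_{a<x<b} { (1/w(x)) · ‖ ν[a,x]·χ_{[x,b]} − ν[x,b]·χ_{[a,x]} ‖_{L_μ^Φ[a,b]} }. If K_{1,Φ}(μ,ν,w) < ∞, then for every Lipschitz continuous function f : [a,b] → ℝ one has ‖ f − (1/ν[a,b]) ∫_a^b f dν ‖_{L_μ^Φ[a,b]} ≤ 2·K_{1,Φ}(μ,ν,w) · ∫_a^b |f'(t)| w(t) dt. -/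
open MeasureTheory Set Filter
open scoped ENNReal NNReal

noncomputable section

/-- A Young function: even, convex, vanishing at `0`, nonnegative, tending to `∞`. -/
def IsYoung (Φ : ℝ → ℝ) : Prop :=
  ConvexOn ℝ Set.univ Φ ∧ (∀ t, Φ (-t) = Φ t) ∧ Φ 0 = 0 ∧ (∀ t, 0 ≤ Φ t) ∧
    Filter.Tendsto Φ Filter.atTop Filter.atTop

/-- A weight on `[a,b]`: nonnegative, measurable, positive a.e. on `[a,b]`. -/
def IsWeight (w : ℝ → ℝ) (a b : ℝ) : Prop :=
  Measurable w ∧ (∀ x, 0 ≤ w x) ∧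
    ∀ᵐ x ∂(MeasureTheory.volume.restrict (Set.Icc a b)), 0 < w x

/-- `Φ` is submultiplicative on `[0,∞)`. -/
def Submult (Φ : ℝ → ℝ) : Prop :=
  ∀ s t : ℝ, 0 ≤ s → 0 ≤ t → Φ (s * t) ≤ Φ s * Φ t

/-- `Φinv` is the inverse of `Φ` restricted to `[0,∞)`. -/
def IsYoungInv (Φ Φinv : ℝ → ℝ) : Prop :=
  (∀ t, 0 ≤ t → 0 ≤ Φinv t) ∧ (∀ t, 0 ≤ t → Φ (Φinv t) = t) ∧
    (∀ t, 0 ≤ t → Φinv (Φ t) = t)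

/-- `μ[x,y] := ∫ₓ^y μ(t) dt`, as an extended nonnegative real. -/
def wInt (μ : ℝ → ℝ) (x y : ℝ) : ℝ≥0∞ :=
  ∫⁻ t in Set.Icc x y, ENNReal.ofReal (μ t)

/-- The Luxemburg (gauge) norm of `f` on `[a,b]` w.r.t. the Young function `Φ`
and the weight `μ`: `inf {k > 0 : ∫ₐ^b Φ(f/k) μ ≤ 1}` (`∞` if no such `k`). -/
def luxNorm (Φ μ : ℝ → ℝ) (a b : ℝ) (f : ℝ → ℝ) : ℝ≥0∞ :=
  sInf {k : ℝ≥0∞ | ∃ c : ℝ, 0 < c ∧ k = ENNReal.ofReal c ∧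
    (∫⁻ x in Set.Icc a b, ENNReal.ofReal (Φ (f x / c) * μ x)) ≤ 1}

/-- `f` is Lipschitz on `[a,b]` and `f'` is a.e. its derivative on `(a,b)`. -/
def LipschitzWithDeriv (f f' : ℝ → ℝ) (a b : ℝ) : Prop :=
  (∃ K, LipschitzOnWith K f (Set.Icc a b)) ∧
    ∀ᵐ x ∂(MeasureTheory.volume.restrict (Set.Ioo a b)), HasDerivAt f (f' x) x

/-- The weighted `L^p` norm `(∫ₐ^b |g|^p w)^{1/p}`, as an extended nonnegative real. -/
def lpNorm (w : ℝ → ℝ) (p a b : ℝ) (g : ℝ → ℝ) : ℝ≥0∞ :=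
  (∫⁻ t in Set.Icc a b, ENNReal.ofReal (|g t| ^ p * w t)) ^ (1 / p)

/-- The Luxemburg (gauge) norm on a general measure space. -/
def luxNormGen {Ω : Type*} [MeasurableSpace Ω] (Φ : ℝ → ℝ) (μ : Measure Ω)
    (f : Ω → ℝ) : ℝ≥0∞ :=
  sInf {k : ℝ≥0∞ | ∃ c : ℝ, 0 < c ∧ k = ENNReal.ofReal c ∧
    (∫⁻ x, ENNReal.ofReal (Φ (f x / c)) ∂μ) ≤ 1}

/-- The Luxemburg (gauge) norm for an extended-real-valued Young function. -/
def luxNormE {Ω : Type*} [MeasurableSpace Ω] (Ψ : ℝ → ℝ≥0∞) (μ : Measure Ω)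
    (f : Ω → ℝ) : ℝ≥0∞ :=
  sInf {k : ℝ≥0∞ | ∃ c : ℝ, 0 < c ∧ k = ENNReal.ofReal c ∧
    (∫⁻ x, Ψ (f x / c) ∂μ) ≤ 1}

/-!
Writing `f'` for the derivative and `κ_t = ν[a,t] χ_{[t,b]} - ν[t,b] χ_{[a,t]}`, Fubini's theorem
turns the identity `f x - f y = ∫ f' t (χ_{t ≤ x} - χ_{t ≤ y}) dt` into
`f x - (1/ν[a,b]) ∫ f dν = (1/ν[a,b]) ∫ f' t κ_t(x) dt`. Minkowski's integral inequality for the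
gauge norm then bounds the left side by `(1/ν[a,b]) ∫ |f' t| ‖κ_t‖ dt`, and
`‖κ_t‖ ≤ ν[a,b] K w(t)` by the choice of `K`. Minkowski's inequality in turn is Jensen's
inequality for the normalised measure `|f' t| ‖κ_t‖ dt`.
-/

namespace IsYoung

variable {Φ : ℝ → ℝ}

theorem even (hΦ : IsYoung Φ) (x : ℝ) : Φ (-x) = Φ x := hΦ.2.1 x

theorem map_zero (hΦ : IsYoung Φ) : Φ 0 = 0 := hΦ.2.2.1

theorem nonneg (hΦ : IsYoung Φ) (x : ℝ) : 0 ≤ Φ x := hΦ.2.2.2.1 x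

theorem continuous (hΦ : IsYoung Φ) : Continuous Φ :=
  continuousOn_univ.1 (hΦ.1.continuousOn isOpen_univ)

theorem measurable (hΦ : IsYoung Φ) : Measurable Φ := hΦ.continuous.measurable

theorem map_abs (hΦ : IsYoung Φ) (x : ℝ) : Φ |x| = Φ x := by
  rcases abs_choice x with h | h <;> rw [h]
  exact hΦ.even x

theorem map_mul_le (hΦ : IsYoung Φ) {s : ℝ} (hs₀ : 0 ≤ s) (hs₁ : s ≤ 1) (x : ℝ) :
    Φ (s * x) ≤ s * Φ x := by
  simpa only [smul_eq_mul, mul_zero, add_zero, hΦ.map_zero] using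
    hΦ.1.2 (mem_univ x) (mem_univ 0) hs₀ (sub_nonneg.2 hs₁) (add_sub_cancel s 1)

theorem map_div_le_map_div (hΦ : IsYoung Φ) {c d : ℝ} (hc : 0 < c) (hcd : c ≤ d) (x : ℝ) :
    Φ (x / d) ≤ Φ (x / c) := by
  have hd : 0 < d := hc.trans_le hcd
  have hle : c / d ≤ 1 := (div_le_one hd).2 hcd
  calc Φ (x / d) = Φ (c / d * (x / c)) := by congr 1; field_simp
    _ ≤ c / d * Φ (x / c) := hΦ.map_mul_le (by positivity) hle _
    _ ≤ Φ (x / c) := mul_le_of_le_one_left (hΦ.nonneg _) hle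

variable {T : Type*} [MeasurableSpace T] {P : Measure T}

theorem map_integral_le (hΦ : IsYoung Φ) (hP : P univ ≤ 1) {u : T → ℝ} (hu : Integrable u P)
    (hΦu : Integrable (fun t => Φ (u t)) P) : Φ (∫ t, u t ∂P) ≤ ∫ t, Φ (u t) ∂P := by
  have : IsFiniteMeasure P := ⟨hP.trans_lt ENNReal.one_lt_top⟩
  rcases eq_zero_or_neZero P with rfl | hP₀
  · simp [hΦ.map_zero]
  have hPle : P.real univ ≤ 1 := ENNReal.toReal_le_of_le_ofReal zero_le_one (by simpa using hP)
  calc Φ (∫ t, u t ∂P) = Φ (P.real univ * ⨍ t, u t ∂P) := by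
        rw [← smul_eq_mul, measure_smul_average]
    _ ≤ P.real univ * Φ (⨍ t, u t ∂P) := hΦ.map_mul_le measureReal_nonneg hPle _
    _ ≤ P.real univ * ⨍ t, Φ (u t) ∂P := by
        gcongr
        exact hΦ.1.map_average_le hΦ.continuous.continuousOn isClosed_univ (by simp) hu hΦu
    _ = ∫ t, Φ (u t) ∂P := by rw [← smul_eq_mul, measure_smul_average]

/-- For `u` not integrable the integral on the left is `0` by convention, and `Φ 0 = 0`. -/
theorem ofReal_map_integral_le (hΦ : IsYoung Φ) (hP : P univ ≤ 1) (u : T → ℝ) :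
    ENNReal.ofReal (Φ (∫ t, u t ∂P)) ≤ ∫⁻ t, ENNReal.ofReal (Φ (u t)) ∂P := by
  by_cases hu : Integrable u P
  swap
  · simp [integral_undef hu, hΦ.map_zero]
  have hnn : 0 ≤ᵐ[P] fun t => Φ (u t) := .of_forall fun t => hΦ.nonneg (u t)
  by_cases hfin : ∫⁻ t, ENNReal.ofReal (Φ (u t)) ∂P = ⊤
  · exact hfin ▸ le_top
  have hΦu : Integrable (fun t => Φ (u t)) P :=
    ⟨hΦ.continuous.comp_aestronglyMeasurable hu.1,
      (hasFiniteIntegral_iff_ofReal hnn).2 (lt_top_iff_ne_top.2 hfin)⟩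
  rw [← ofReal_integral_eq_lintegral_ofReal hΦu hnn]
  exact ENNReal.ofReal_le_ofReal (hΦ.map_integral_le hP hu hΦu)

end IsYoung

section LuxNormGen

variable {Ω : Type*} [MeasurableSpace Ω] {Φ : ℝ → ℝ} {ρ : Measure Ω} {f g : Ω → ℝ}

theorem luxNormGen_congr_ae (hfg : f =ᵐ[ρ] g) : luxNormGen Φ ρ f = luxNormGen Φ ρ g := by
  have hlint (c : ℝ) : ∫⁻ x, ENNReal.ofReal (Φ (f x / c)) ∂ρ =
      ∫⁻ x, ENNReal.ofReal (Φ (g x / c)) ∂ρ :=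
    lintegral_congr_ae (hfg.mono fun x hx => by simp only [hx])
  simp only [luxNormGen, hlint]

theorem luxNormGen_le_of_lintegral_le_one {c : ℝ} (hc : 0 < c)
    (hf : ∫⁻ x, ENNReal.ofReal (Φ (f x / c)) ∂ρ ≤ 1) : luxNormGen Φ ρ f ≤ ENNReal.ofReal c :=
  sInf_le ⟨c, hc, rfl, hf⟩

theorem lintegral_le_one_of_luxNormGen_lt (hΦ : IsYoung Φ) {c : ℝ}
    (hc : luxNormGen Φ ρ f < ENNReal.ofReal c) :
    ∫⁻ x, ENNReal.ofReal (Φ (f x / c)) ∂ρ ≤ 1 := by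
  obtain ⟨_, ⟨d, hd, rfl, hle⟩, hdc⟩ := sInf_lt_iff.1 hc
  have hdc : d ≤ c := ((ENNReal.ofReal_lt_ofReal_iff_of_nonneg hd.le).1 hdc).le
  exact (lintegral_mono fun x =>
    ENNReal.ofReal_le_ofReal (hΦ.map_div_le_map_div hd hdc (f x))).trans hle

theorem luxNormGen_zero (hΦ : IsYoung Φ) : luxNormGen Φ ρ (fun _ => 0) = 0 := by
  refine nonpos_iff_eq_zero.1 (ENNReal.le_of_forall_pos_le_add fun ε hε _ => ?_)
  rw [zero_add, ← ENNReal.ofReal_coe_nnreal]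
  exact luxNormGen_le_of_lintegral_le_one hε (by simp [hΦ.map_zero])

theorem luxNormGen_const_mul_le (hΦ : IsYoung Φ) (r : ℝ) :
    luxNormGen Φ ρ (fun x => r * f x) ≤ ENNReal.ofReal |r| * luxNormGen Φ ρ f := by
  rcases eq_or_ne r 0 with rfl | hr
  · simp [luxNormGen_zero hΦ]
  have hr : 0 < |r| := abs_pos.2 hr
  have hr₀ : ENNReal.ofReal |r| ≠ 0 := (ENNReal.ofReal_pos.2 hr).ne'
  rw [← ENNReal.div_le_iff' hr₀ ENNReal.ofReal_ne_top]
  refine le_sInf ?_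
  rintro _ ⟨c, hc, rfl, hle⟩
  rw [ENNReal.div_le_iff' hr₀ ENNReal.ofReal_ne_top, ← ENNReal.ofReal_mul hr.le]
  refine luxNormGen_le_of_lintegral_le_one (by positivity)
    ((lintegral_congr fun x => ?_).trans_le hle)
  have habs : |r * f x / (|r| * c)| = |f x / c| := by
    rw [abs_div, abs_mul, abs_mul, abs_abs, abs_div, mul_div_mul_left _ _ hr.ne']
  rw [← hΦ.map_abs, habs, hΦ.map_abs]

variable {T : Type*} [MeasurableSpace T]

theorem lintegral_map_integral_le_one (hΦ : IsYoung Φ) [SFinite ρ] {P : Measure T} [SFinite P]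
    (hP : P univ ≤ 1) {u : T → Ω → ℝ} (hu : Measurable (Function.uncurry u))
    (hle : ∀ᵐ t ∂P, ∫⁻ x, ENNReal.ofReal (Φ (u t x)) ∂ρ ≤ 1) :
    ∫⁻ x, ENNReal.ofReal (Φ (∫ t, u t x ∂P)) ∂ρ ≤ 1 := by
  have hΦu : Measurable fun p : Ω × T => ENNReal.ofReal (Φ (u p.2 p.1)) :=
    (hΦ.measurable.comp (hu.comp measurable_swap)).ennreal_ofReal
  calc ∫⁻ x, ENNReal.ofReal (Φ (∫ t, u t x ∂P)) ∂ρ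
      ≤ ∫⁻ x, ∫⁻ t, ENNReal.ofReal (Φ (u t x)) ∂P ∂ρ :=
        lintegral_mono fun x => hΦ.ofReal_map_integral_le hP _
    _ = ∫⁻ t, ∫⁻ x, ENNReal.ofReal (Φ (u t x)) ∂ρ ∂P :=
        lintegral_lintegral_swap hΦu.aemeasurable
    _ ≤ ∫⁻ _, 1 ∂P := lintegral_mono_ae hle
    _ ≤ 1 := by rwa [lintegral_one]

theorem luxNormGen_integral_le_of_lt (hΦ : IsYoung Φ) [SFinite ρ] {τ : Measure T} [SFinite τ]
    {k : T → Ω → ℝ} (hk : Measurable (Function.uncurry k)) {c : T → ℝ} (hc : Measurable c)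
    (hc₀ : ∀ᵐ t ∂τ, 0 < c t) (hkc : ∀ᵐ t ∂τ, luxNormGen Φ ρ (k t) < ENNReal.ofReal (c t))
    {M : ℝ} (hM : 0 < M) (hcM : ∫⁻ t, ENNReal.ofReal (c t) ∂τ ≤ ENNReal.ofReal M) :
    luxNormGen Φ ρ (fun x => ∫ t, k t x ∂τ) ≤ ENNReal.ofReal M := by
  have hdens : Measurable fun t => ENNReal.ofReal (c t / M) := (hc.div_const M).ennreal_ofReal
  set P := τ.withDensity fun t => ENNReal.ofReal (c t / M) with hP
  have hPle : P univ ≤ 1 := by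
    simp only [hP, withDensity_apply _ MeasurableSet.univ, Measure.restrict_univ,
      ENNReal.ofReal_div_of_pos hM, ENNReal.div_eq_inv_mul]
    rw [lintegral_const_mul _ hc.ennreal_ofReal, ← ENNReal.div_eq_inv_mul]
    exact ENNReal.div_le_of_le_mul (by rwa [one_mul])
  have hint (x : Ω) : (∫ t, k t x ∂τ) / M = ∫ t, k t x / c t ∂P := by
    rw [hP, integral_withDensity_eq_integral_toReal_smul hdens (by simp), ← integral_div]
    refine integral_congr_ae (hc₀.mono fun t ht => ?_)
    simp only [smul_eq_mul, ENNReal.toReal_ofReal (div_pos ht hM).le]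
    field_simp
  refine luxNormGen_le_of_lintegral_le_one hM ?_
  simp only [hint]
  refine lintegral_map_integral_le_one hΦ hPle (hk.div (hc.comp measurable_fst)) ?_
  filter_upwards [(withDensity_absolutelyContinuous _ _).ae_le hkc] with t ht
  exact lintegral_le_one_of_luxNormGen_lt hΦ ht

/-- The bound `c` replaces `t ↦ luxNormGen Φ ρ (k t)`, which need not be known to be measurable.
Adding a small positive function to `c` makes the strict inequalities of
`luxNormGen_integral_le_of_lt` available where `c` vanishes. -/
theorem luxNormGen_integral_le (hΦ : IsYoung Φ) [SFinite ρ] {τ : Measure T} [SigmaFinite τ]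
    {k : T → Ω → ℝ} (hk : Measurable (Function.uncurry k)) {c : T → ℝ≥0∞} (hc : Measurable c)
    (hkc : ∀ᵐ t ∂τ, luxNormGen Φ ρ (k t) ≤ c t) :
    luxNormGen Φ ρ (fun x => ∫ t, k t x ∂τ) ≤ ∫⁻ t, c t ∂τ := by
  refine le_of_forall_gt_imp_ge_of_dense fun L hL => ?_
  obtain ⟨M, hcM, hML⟩ := ENNReal.lt_iff_exists_nnreal_btwn.1 hL
  refine le_trans ?_ hML.le
  obtain ⟨δ, hδ₀, hδ, hδint⟩ := exists_pos_lintegral_lt_of_sigmaFinite τ (tsub_pos_of_lt hcM).ne'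
  have hsum : ∫⁻ t, (c t + δ t) ∂τ ≤ M := by
    rw [lintegral_add_left hc]
    exact (add_le_add_right hδint.le _).trans_eq (add_tsub_cancel_of_le hcM.le)
  have hfin : ∀ᵐ t ∂τ, c t < ⊤ := ae_lt_top hc hcM.ne_top
  have hsum_fin {t : T} (ht : c t < ⊤) : c t + δ t ≠ ⊤ := ENNReal.add_ne_top.2 ⟨ht.ne, by simp⟩
  have hM : (0 : ℝ) < M := NNReal.coe_pos.2 (ENNReal.coe_pos.1 (zero_le.trans_lt hcM))
  have hpos (t : T) : 0 < c t + δ t := (ENNReal.coe_pos.2 (hδ₀ t)).trans_le le_add_self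
  rw [← ENNReal.ofReal_coe_nnreal] at hsum ⊢
  refine luxNormGen_integral_le_of_lt hΦ hk (hc.add hδ.coe_nnreal_ennreal).ennreal_toReal ?_ ?_ hM
    ((lintegral_mono fun t => ENNReal.ofReal_toReal_le).trans hsum)
  · filter_upwards [hfin] with t ht
    exact ENNReal.toReal_pos (hpos t).ne' (hsum_fin ht)
  · filter_upwards [hkc, hfin] with t hkt ht
    rw [Pi.add_apply, ENNReal.ofReal_toReal (hsum_fin ht)]
    exact hkt.trans_lt (ENNReal.lt_add_right ht.ne (ENNReal.coe_pos.2 (hδ₀ t)).ne')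

end LuxNormGen

/-- The measure `μ(x) dx` on `[a,b]`, through which the weighted norm `luxNorm` becomes an instance
of `luxNormGen`. -/
def weightMeasure (μ : ℝ → ℝ) (a b : ℝ) : Measure ℝ :=
  (volume.restrict (Icc a b)).withDensity fun x => ENNReal.ofReal (μ x)

theorem ae_weightMeasure_mem_Icc (μ : ℝ → ℝ) (a b : ℝ) :
    ∀ᵐ x ∂weightMeasure μ a b, x ∈ Icc a b :=
  (withDensity_absolutelyContinuous _ _).ae_le (ae_restrict_mem measurableSet_Icc)

instance sFinite_weightMeasure (μ : ℝ → ℝ) (a b : ℝ) : SFinite (weightMeasure μ a b) := by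
  unfold weightMeasure
  infer_instance

theorem luxNorm_eq_luxNormGen {Φ μ : ℝ → ℝ} (hΦ : IsYoung Φ) (hμ : Measurable μ) (a b : ℝ)
    (f : ℝ → ℝ) : luxNorm Φ μ a b f = luxNormGen Φ (weightMeasure μ a b) f := by
  have hlint (c : ℝ) : ∫⁻ x in Icc a b, ENNReal.ofReal (Φ (f x / c) * μ x) =
      ∫⁻ x, ENNReal.ofReal (Φ (f x / c)) ∂weightMeasure μ a b := by
    rw [weightMeasure, lintegral_withDensity_eq_lintegral_mul_non_measurable _ hμ.ennreal_ofReal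
      (by simp)]
    refine lintegral_congr fun x => ?_
    rw [Pi.mul_apply, ENNReal.ofReal_mul (hΦ.nonneg _), mul_comm]
  simp only [luxNorm, luxNormGen, hlint]

section Kernel

variable {ν : Measure ℝ} {a b : ℝ}

/-- The kernel `ν[a,t] χ_{[t,b]} - ν[t,b] χ_{[a,t]}`, which represents the deviation of a function
from its `ν`-mean through its derivative at `t`. -/
def poincareKernel (ν : Measure ℝ) (a b t : ℝ) : ℝ → ℝ := fun x =>
  ν.real (Icc a t) * (Icc t b).indicator (fun _ => 1) x -
    ν.real (Icc t b) * (Icc a t).indicator (fun _ => 1) x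

/-- The constant `K_{1,Φ}(μ,ν,w)`, for the gauge norm over an arbitrary measure `ρ` in place of
`μ(x) dx`. -/
def poincareConst (Φ : ℝ → ℝ) (ρ ν : Measure ℝ) (w : ℝ → ℝ) (a b : ℝ) : ℝ≥0∞ :=
  (ν (Icc a b))⁻¹ *
    ⨆ t ∈ Ioo a b, (ENNReal.ofReal (w t))⁻¹ * luxNormGen Φ ρ (poincareKernel ν a b t)

theorem measurable_poincareKernel [IsLocallyFiniteMeasure ν] :
    Measurable (Function.uncurry (poincareKernel ν a b)) := by
  have hleft : Measurable fun t => ν.real (Icc a t) := Monotone.measurable fun _ _ h =>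
    measureReal_mono (Icc_subset_Icc_right h) measure_Icc_lt_top.ne
  have hright : Measurable fun t => ν.real (Icc t b) := Antitone.measurable fun _ _ h =>
    measureReal_mono (Icc_subset_Icc_left h) measure_Icc_lt_top.ne
  have hupper : MeasurableSet {p : ℝ × ℝ | p.2 ∈ Icc p.1 b} :=
    (measurableSet_le measurable_fst measurable_snd).inter
      (measurableSet_le measurable_snd measurable_const)
  have hlower : MeasurableSet {p : ℝ × ℝ | p.2 ∈ Icc a p.1} :=
    (measurableSet_le measurable_const measurable_snd).inter
      (measurableSet_le measurable_snd measurable_fst)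
  exact ((hleft.comp measurable_fst).mul (measurable_const.indicator hupper)).sub
    ((hright.comp measurable_fst).mul (measurable_const.indicator hlower))

theorem luxNormGen_poincareKernel_le [IsLocallyFiniteMeasure ν] (hν : 0 < ν (Icc a b))
    (Φ : ℝ → ℝ) (ρ : Measure ℝ) {w : ℝ → ℝ} {t : ℝ} (ht : t ∈ Ioo a b) (hwt : 0 < w t) :
    luxNormGen Φ ρ (poincareKernel ν a b t) ≤
      ν (Icc a b) * poincareConst Φ ρ ν w a b * ENNReal.ofReal (w t) := by
  rw [poincareConst, ← mul_assoc, ENNReal.mul_inv_cancel hν.ne' measure_Icc_lt_top.ne, one_mul,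
    ← ENNReal.div_le_iff (ENNReal.ofReal_pos.2 hwt).ne' ENNReal.ofReal_ne_top,
    ENNReal.div_eq_inv_mul]
  exact le_iSup₂ (f := fun t (_ : t ∈ Ioo a b) =>
    (ENNReal.ofReal (w t))⁻¹ * luxNormGen Φ ρ (poincareKernel ν a b t)) t ht

theorem luxNormGen_const_mul_poincareKernel_le {Φ : ℝ → ℝ} (hΦ : IsYoung Φ)
    [IsLocallyFiniteMeasure ν] (hν : 0 < ν (Icc a b)) (ρ : Measure ℝ) {w : ℝ → ℝ} {t : ℝ}
    (ht : t ∈ Ioo a b) (hwt : 0 < w t) (r : ℝ) :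
    luxNormGen Φ ρ (fun x => (ν.real (Icc a b))⁻¹ * r * poincareKernel ν a b t x) ≤
      poincareConst Φ ρ ν w a b * ENNReal.ofReal (|r| * w t) := by
  have hνtop : ν (Icc a b) ≠ ⊤ := measure_Icc_lt_top.ne
  have hN : 0 < ν.real (Icc a b) := ENNReal.toReal_pos hν.ne' hνtop
  have habs : ENNReal.ofReal |(ν.real (Icc a b))⁻¹ * r| =
      (ν (Icc a b))⁻¹ * ENNReal.ofReal |r| := by
    rw [abs_mul, abs_of_pos (inv_pos.2 hN), ENNReal.ofReal_mul (inv_pos.2 hN).le,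
      ENNReal.ofReal_inv_of_pos hN, ofReal_measureReal hνtop]
  calc luxNormGen Φ ρ (fun x => (ν.real (Icc a b))⁻¹ * r * poincareKernel ν a b t x)
      ≤ (ν (Icc a b))⁻¹ * ENNReal.ofReal |r| * luxNormGen Φ ρ (poincareKernel ν a b t) :=
        habs ▸ luxNormGen_const_mul_le hΦ _
    _ ≤ (ν (Icc a b))⁻¹ * ENNReal.ofReal |r| *
          (ν (Icc a b) * poincareConst Φ ρ ν w a b * ENNReal.ofReal (w t)) := by
        gcongr
        exact luxNormGen_poincareKernel_le hν Φ ρ ht hwt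
    _ = (ν (Icc a b))⁻¹ * ν (Icc a b) *
          (poincareConst Φ ρ ν w a b * (ENNReal.ofReal |r| * ENNReal.ofReal (w t))) := by ring
    _ = poincareConst Φ ρ ν w a b * ENNReal.ofReal (|r| * w t) := by
        rw [ENNReal.inv_mul_cancel hν.ne' hνtop, one_mul, ENNReal.ofReal_mul (abs_nonneg r)]

theorem poincareKernel_eq_indicator_sub [IsLocallyFiniteMeasure ν] {t x : ℝ} (ht : t ∈ Icc a b)
    (hνt : ν {t} = 0) (hx : x ∈ Icc a b) (hxt : x ≠ t) :
    poincareKernel ν a b t x =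
      ν.real (Icc a b) * (Iic x).indicator (fun _ => 1) t - ν.real (Icc t b) := by
  have hsplit : ν.real (Icc a b) = ν.real (Icc a t) + ν.real (Icc t b) := by
    rw [← Icc_union_Icc_eq_Icc ht.1 ht.2]
    refine measureReal_union₀ measurableSet_Icc.nullMeasurableSet ?_ measure_Icc_lt_top.ne
      measure_Icc_lt_top.ne
    rw [AEDisjoint, Icc_inter_Icc_eq_singleton ht.1 ht.2, hνt]
  rcases hxt.lt_or_gt with h | h
  · simp [poincareKernel, indicator, hx.1, h.le, h.not_ge]
  · simp [poincareKernel, indicator, hx.2, h.le, h.not_ge, hsplit]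

end Kernel

theorem ae_measure_singleton_eq_zero {α : Type*} [MeasurableSpace α] [MeasurableSingletonClass α]
    (τ ν : Measure α) [NullSingletonClass τ] [SFinite ν] : ∀ᵐ t ∂τ, ν {t} = 0 := by
  filter_upwards [(Measure.countable_meas_level_set_pos (μ := ν) measurable_id).ae_notMem τ]
    with t ht
  simpa using ht

section Fubini

variable {h : ℝ → ℝ} {τ : Measure ℝ} [SFinite τ]

theorem integrable_prod_mul_indicator_Iic (hh : Integrable h τ) (σ : Measure ℝ)
    [IsFiniteMeasure σ] :
    Integrable (fun p : ℝ × ℝ => h p.2 * (Iic p.1).indicator (fun _ => 1) p.2) (σ.prod τ) := by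
  have hset : MeasurableSet {p : ℝ × ℝ | p.2 ≤ p.1} :=
    measurableSet_le measurable_snd measurable_fst
  refine ((hh.comp_snd σ).indicator hset).congr (.of_forall fun p => ?_)
  simp [indicator]

theorem integral_indicator_Iic_const_one (σ : Measure ℝ) (t : ℝ) :
    ∫ y, (Iic y).indicator (fun _ => (1 : ℝ)) t ∂σ = σ.real (Ici t) :=
  integral_indicator_one measurableSet_Ici

theorem integrable_mul_measureReal_Ici (hh : Integrable h τ) (σ : Measure ℝ)
    [IsFiniteMeasure σ] : Integrable (fun t => h t * σ.real (Ici t)) τ := by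
  simpa only [integral_const_mul, integral_indicator_Iic_const_one] using
    (integrable_prod_mul_indicator_Iic hh σ).integral_prod_right

theorem integral_mul_measureReal_Ici (hh : Integrable h τ) (σ : Measure ℝ)
    [IsFiniteMeasure σ] :
    ∫ t, h t * σ.real (Ici t) ∂τ =
      ∫ y, ∫ t, h t * (Iic y).indicator (fun _ => 1) t ∂τ ∂σ := by
  rw [integral_integral_swap (integrable_prod_mul_indicator_Iic hh σ)]
  simp only [integral_const_mul, integral_indicator_Iic_const_one]

end Fubini

section Representation

variable {ν : Measure ℝ} {a b : ℝ} {f : ℝ → ℝ}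

theorem integral_deriv_mul_indicator_Iic (hf : AbsolutelyContinuousOnInterval f a b) {x : ℝ}
    (hx : x ∈ Icc a b) :
    ∫ t in Ioc a b, deriv f t * (Iic x).indicator (fun _ => 1) t = f x - f a := by
  have hab : a ≤ b := hx.1.trans hx.2
  have hfx : AbsolutelyContinuousOnInterval f a x :=
    hf.mono (by simpa only [uIcc_of_le, hx.1, hab] using Icc_subset_Icc_right hx.2)
  rw [← hfx.integral_deriv_eq_sub, intervalIntegral.integral_of_le hx.1]
  simp only [← indicator_mul_right, mul_one]
  rw [setIntegral_indicator measurableSet_Iic, Ioc_inter_Iic, inf_of_le_right hx.2]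

theorem integral_deriv_mul_measureReal_Ici (hf : AbsolutelyContinuousOnInterval f a b)
    {σ : Measure ℝ} [IsFiniteMeasure σ] (hσ : ∀ᵐ y ∂σ, y ∈ Icc a b) :
    ∫ t in Ioc a b, deriv f t * σ.real (Ici t) = ∫ y, (f y - f a) ∂σ := by
  rw [integral_mul_measureReal_Ici hf.intervalIntegrable_deriv.1]
  exact integral_congr_ae (hσ.mono fun _ hy => integral_deriv_mul_indicator_Iic hf hy)

theorem integral_deriv_mul_poincareKernel (ν : Measure ℝ) [IsLocallyFiniteMeasure ν]
    (hf : AbsolutelyContinuousOnInterval f a b) {x : ℝ} (hx : x ∈ Icc a b) :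
    ∫ t in Ioc a b, deriv f t * poincareKernel ν a b t x =
      ν.real (Icc a b) * f x - ∫ y in Icc a b, f y ∂ν := by
  have : IsFiniteMeasure (ν.restrict (Icc a b)) := ⟨by simp [measure_Icc_lt_top]⟩
  have hab : a ≤ b := hx.1.trans hx.2
  have hfν : IntegrableOn f (Icc a b) ν :=
    (uIcc_of_le hab ▸ hf.continuousOn).integrableOn_compact isCompact_Icc
  have hkernel : ∀ᵐ t ∂volume.restrict (Ioc a b), deriv f t * poincareKernel ν a b t x =
      ν.real (Icc a b) * (deriv f t * (Iic x).indicator (fun _ => 1) t) -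
        deriv f t * (ν.restrict (Icc a b)).real (Ici t) := by
    filter_upwards [ae_restrict_of_ae (ae_measure_singleton_eq_zero volume ν),
      ae_restrict_of_ae (Measure.ae_ne volume x), ae_restrict_mem measurableSet_Ioc]
      with t hνt htx ht
    have hIcc : Ici t ∩ Icc a b = Icc t b := by
      rw [← Ici_inter_Iic, ← inter_assoc, Ici_inter_Ici, sup_of_le_left ht.1.le, Ici_inter_Iic]
    rw [measureReal_restrict_apply measurableSet_Ici, hIcc,
      poincareKernel_eq_indicator_sub (Ioc_subset_Icc_self ht) hνt hx htx.symm]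
    ring
  have hint : IntegrableOn (fun t => deriv f t * (Iic x).indicator (fun _ => 1) t) (Ioc a b) := by
    simpa only [← indicator_mul_right, mul_one] using
      hf.intervalIntegrable_deriv.1.indicator measurableSet_Iic
  rw [integral_congr_ae hkernel, integral_sub (hint.const_mul _)
    (integrable_mul_measureReal_Ici hf.intervalIntegrable_deriv.1 _), integral_const_mul,
    integral_deriv_mul_indicator_Iic hf hx,
    integral_deriv_mul_measureReal_Ici hf (ae_restrict_mem measurableSet_Icc),
    integral_sub hfν (integrable_const _), setIntegral_const, smul_eq_mul]
  ring

theorem sub_mean_eq_integral_deriv_mul_poincareKernel [IsLocallyFiniteMeasure ν]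
    (hν : 0 < ν (Icc a b)) (hf : AbsolutelyContinuousOnInterval f a b) {x : ℝ}
    (hx : x ∈ Icc a b) :
    f x - (ν.real (Icc a b))⁻¹ * ∫ y in Icc a b, f y ∂ν =
      ∫ t in Ioo a b, (ν.real (Icc a b))⁻¹ * deriv f t * poincareKernel ν a b t x := by
  have hN : ν.real (Icc a b) ≠ 0 := (ENNReal.toReal_pos hν.ne' measure_Icc_lt_top.ne).ne'
  simp only [mul_assoc]
  rw [integral_const_mul, ← integral_Ioc_eq_integral_Ioo,
    integral_deriv_mul_poincareKernel ν hf hx, mul_sub, inv_mul_cancel_left₀ hN]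

end Representation

theorem orlicz_poincare_p_eq_one_sufficient_general {a b : ℝ} {Φ w f f' : ℝ → ℝ}
    (hΦ : IsYoung Φ) (hw : IsWeight w a b) {ρ : Measure ℝ} [SFinite ρ]
    (hρ : ∀ᵐ x ∂ρ, x ∈ Icc a b) {ν : Measure ℝ} [IsLocallyFiniteMeasure ν]
    (hν : 0 < ν (Icc a b)) (hf : AbsolutelyContinuousOnInterval f a b)
    (hf' : ∀ᵐ t ∂volume.restrict (Ioo a b), HasDerivAt f (f' t) t) :
    luxNormGen Φ ρ (fun x => f x - (ν.real (Icc a b))⁻¹ * ∫ y in Icc a b, f y ∂ν) ≤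
      poincareConst Φ ρ ν w a b * ∫⁻ t in Icc a b, ENNReal.ofReal (|f' t| * w t) := by
  have hmeas : Measurable fun t => ENNReal.ofReal (|deriv f t| * w t) :=
    ((measurable_deriv f).abs.mul hw.1).ennreal_ofReal
  calc luxNormGen Φ ρ (fun x => f x - (ν.real (Icc a b))⁻¹ * ∫ y in Icc a b, f y ∂ν)
      = luxNormGen Φ ρ (fun x =>
          ∫ t in Ioo a b, (ν.real (Icc a b))⁻¹ * deriv f t * poincareKernel ν a b t x) :=
        luxNormGen_congr_ae
          (hρ.mono fun _ hx => sub_mean_eq_integral_deriv_mul_poincareKernel hν hf hx)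
    _ ≤ ∫⁻ t in Ioo a b, poincareConst Φ ρ ν w a b * ENNReal.ofReal (|deriv f t| * w t) := by
        refine luxNormGen_integral_le hΦ
          ((((measurable_deriv f).const_mul _).comp measurable_fst).mul measurable_poincareKernel)
          (hmeas.const_mul _) ?_
        filter_upwards [ae_restrict_mem measurableSet_Ioo,
          ae_restrict_of_ae_restrict_of_subset Ioo_subset_Icc_self hw.2.2] with t ht hwt
        exact luxNormGen_const_mul_poincareKernel_le hΦ hν ρ ht hwt _
    _ = poincareConst Φ ρ ν w a b * ∫⁻ t in Ioo a b, ENNReal.ofReal (|deriv f t| * w t) :=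
        lintegral_const_mul _ hmeas
    _ = poincareConst Φ ρ ν w a b * ∫⁻ t in Icc a b, ENNReal.ofReal (|f' t| * w t) := by
        rw [← restrict_Ioo_eq_restrict_Icc]
        congr 1
        exact lintegral_congr_ae (hf'.mono fun t ht => by simp only [ht.deriv])

/-- Sufficiency of `K_{1,Φ}(μ,ν,w) < ∞` for the `(Φ,1)` Orlicz–Poincaré inequality. -/
theorem orlicz_poincare_p_eq_one_sufficient
    (a b : ℝ) (hab : a < b) (Φ μ w : ℝ → ℝ)
    (hΦ : IsYoung Φ) (hμ : IsWeight μ a b) (hw : IsWeight w a b)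
    (ν : Measure ℝ) [IsFiniteMeasure ν] (hν : 0 < ν (Set.Icc a b))
    (K : ℝ≥0∞)
    (hK : K = (ν (Set.Icc a b))⁻¹ *
      ⨆ x ∈ Set.Ioo a b, (ENNReal.ofReal (w x))⁻¹ *
        luxNorm Φ μ a b (fun y =>
          (ν (Set.Icc a x)).toReal * Set.indicator (Set.Icc x b) (fun _ => (1:ℝ)) y -
            (ν (Set.Icc x b)).toReal * Set.indicator (Set.Icc a x) (fun _ => (1:ℝ)) y))
    (hKfin : K < ⊤) :
    ∀ f f' : ℝ → ℝ, LipschitzWithDeriv f f' a b →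
      luxNorm Φ μ a b
        (fun x => f x - (ν (Set.Icc a b)).toReal⁻¹ * ∫ y in Set.Icc a b, f y ∂ν)
        ≤ 2 * K * ∫⁻ t in Set.Icc a b, ENNReal.ofReal (|f' t| * w t) := by
  rintro f f' ⟨⟨L, hL⟩, hf'⟩
  have hf : AbsolutelyContinuousOnInterval f a b :=
    LipschitzOnWith.absolutelyContinuousOnInterval (by rwa [uIcc_of_le hab.le])
  simp only [luxNorm_eq_luxNormGen hΦ hμ.1] at hK ⊢
  have hKconst : poincareConst Φ (weightMeasure μ a b) ν w a b = K := hK.symm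
  refine (orlicz_poincare_p_eq_one_sufficient_general hΦ hw (ae_weightMeasure_mem_Icc μ a b) hν hf
    hf').trans ?_
  rw [hKconst]
  gcongr
  exact le_mul_of_one_le_left zero_le one_le_two
end
end

section
/- Let -∞ < a < b < ∞, 1 < p < ∞ with conjugate exponent p' = p/(p−1), let μ and w be weights on [a,b], let ν be a nonnegative finite Borel measure on [a,b] with ν[a,b] > 0, and let Φ be a Young function that is invertible on [0,∞). Suppose there is a constant C such that ‖ f − (1/ν[a,b]) ∫_a^b f dν ‖_{L_μ^Φ[a,b]} ≤ C · ‖f'‖_{L_w^p[a,b]} for all Lipschitz continuous functions f : [a,b] → ℝ. Then K̃_{p,Φ}(μ,ν,w) := (1/ν[a,b]) · ( sup_{a<x<b} [Φ^{-1}(1/μ[x,b])]^{-1} (∫_a^x ν[a,t]^{p'} w(t)^{1−p'} dt)^{1/p'} + sup_{a<x<b} [Φ^{-1}(1/μ[a,x])]^{-1} (∫_x^b ν[t,b]^{p'} w(t)^{1−p'} dt)^{1/p'} ) satisfies K̃_{p,Φ}(μ,ν,w) ≤ 2C; in particular it is finite. -/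
open MeasureTheory Set Filter
open scoped ENNReal NNReal

noncomputable section

/-!
Test the inequality on primitives `f` of bounded nonnegative functions `g` supported on `[a, x]` or
on `[x, b]`, normalised to vanish on the other interval `T`. On `T` the centred function is the
constant `-ν[a,b]⁻¹ ∫ f dν`, so its gauge norm is at least `[Φ⁻¹(1/μ(T))]⁻¹ ν[a,b]⁻¹ ∫ f dν`, and
by Tonelli `∫ f dν` is the integral of `g` against `ν[a,t]` or `ν[t,b]`. Thus `g ↦ ∫ g(t) ν[a,t] dt`
is bounded in the norm of `L^p_w`, and the converse of Hölder's inequality turns this bound into the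
dual norm appearing in `K̃`.
-/

/-! ### A converse of Hölder's inequality with weights -/

/-- The function `h = v ^ (q - 1) * w ^ (1 - q)` for which Hölder's inequality
`∫ h v ≤ (∫ h ^ p w) ^ (1 / p) (∫ v ^ q w ^ (1 - q)) ^ (1 / q)` is an equality, evaluated at a point
where the functions have the values `v` and `w`. -/
def holderExtremizer (q v w : ℝ) : ℝ :=
  v ^ (q - 1) * w ^ (1 - q)

namespace holderExtremizer

variable {p q v w : ℝ}

theorem nonneg (hv : 0 ≤ v) (hw : 0 ≤ w) : 0 ≤ holderExtremizer q v w :=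
  mul_nonneg (Real.rpow_nonneg hv _) (Real.rpow_nonneg hw _)

theorem mul_self (hq : q ≠ 0) (hv : 0 ≤ v) : holderExtremizer q v w * v = v ^ q * w ^ (1 - q) := by
  rw [holderExtremizer, mul_right_comm]
  congr 1
  simpa using (Real.rpow_add_one' hv (y := q - 1) (by simpa using hq)).symm

theorem rpow_mul (hpq : p.HolderConjugate q) (hv : 0 ≤ v) (hw : 0 < w) :
    holderExtremizer q v w ^ p * w = v ^ q * w ^ (1 - q) := by
  rw [holderExtremizer, Real.mul_rpow (Real.rpow_nonneg hv _) (Real.rpow_nonneg hw.le _),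
    ← Real.rpow_mul hv, ← Real.rpow_mul hw.le, hpq.symm.sub_one_mul_conj, mul_assoc,
    ← Real.rpow_add_one hw.ne']
  congr 2
  linear_combination -hpq.symm.sub_one_mul_conj

theorem le_of_le_of_le {D δ : ℝ} (hq : 1 ≤ q) (hv : 0 ≤ v) (hvD : v ≤ D) (hδ : 0 < δ)
    (hδw : δ ≤ w) : holderExtremizer q v w ≤ holderExtremizer q D δ :=
  mul_le_mul (Real.rpow_le_rpow hv hvD (by linarith))
    (Real.rpow_le_rpow_of_nonpos hδ hδw (by linarith)) (Real.rpow_nonneg (hδ.le.trans hδw) _)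
    (Real.rpow_nonneg (hv.trans hvD) _)

end holderExtremizer

theorem mul_rpow_le_of_mul_le_mul_rpow {p q : ℝ} (hpq : p.HolderConjugate q) {A B I : ℝ≥0∞}
    (hI : I ≠ ∞) (h : B * I ≤ A * I ^ (1 / p)) : B * I ^ (1 / q) ≤ A := by
  rcases eq_or_ne I 0 with rfl | hI0
  · rw [ENNReal.zero_rpow_of_pos hpq.symm.one_div_pos, mul_zero]
    exact zero_le
  have hsplit : I ^ (1 / q) * I ^ (1 / p) = I := by
    rw [← ENNReal.rpow_add _ _ hI0 hI, hpq.symm.one_div_add_one_div, one_div_one, ENNReal.rpow_one]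
  have hne_zero : I ^ (1 / p) ≠ 0 := (ENNReal.rpow_pos (pos_iff_ne_zero.2 hI0) hI).ne'
  have hne_top : I ^ (1 / p) ≠ ∞ := ENNReal.rpow_ne_top_of_nonneg hpq.one_div_nonneg hI
  rw [← ENNReal.mul_le_mul_iff_left hne_zero hne_top, mul_assoc, hsplit]
  exact h

section ConverseHolder

variable {α : Type*} [MeasurableSpace α] {m : Measure α} {p q : ℝ} {v w : α → ℝ} {A B : ℝ≥0∞}

theorem setLIntegral_comp_indicator {β : Type*} [Zero β] {S U : Set α} (hS : MeasurableSet S)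
    (hSU : S ⊆ U) {F : α → β → ℝ≥0∞} (hF : ∀ x, F x 0 = 0) (h : α → β) :
    ∫⁻ x in U, F x (S.indicator h x) ∂m = ∫⁻ x in S, F x (h x) ∂m := by
  have hcomp : (fun x => F x (S.indicator h x)) = S.indicator fun x => F x (h x) := by
    ext x
    by_cases hx : x ∈ S <;> simp [hx, hF]
  rw [hcomp, setLIntegral_indicator hS, inter_eq_left.2 hSU]

theorem mul_setLIntegral_rpow_le_of_forall_bounded (hpq : p.HolderConjugate q)
    (hv : Measurable v) (hv0 : ∀ x, 0 ≤ v x) (hw : Measurable w)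
    (H : ∀ h : α → ℝ, Measurable h → (∀ x, 0 ≤ h x) → BddAbove (range h) →
      B * ∫⁻ x, ENNReal.ofReal (h x * v x) ∂m ≤
        A * (∫⁻ x, ENNReal.ofReal (h x ^ p * w x) ∂m) ^ (1 / p))
    {E : Set α} (hE : MeasurableSet E) (hmE : m E ≠ ∞) {D δ : ℝ} (hδ : 0 < δ)
    (hvE : ∀ x ∈ E, v x ≤ D) (hwE : ∀ x ∈ E, δ ≤ w x) :
    B * (∫⁻ x in E, ENNReal.ofReal (v x ^ q * w x ^ (1 - q)) ∂m) ^ (1 / q) ≤ A := by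
  set u : α → ℝ := fun x => holderExtremizer q (v x) (w x)
  have hu0 : ∀ x ∈ E, 0 ≤ u x := fun x hx =>
    holderExtremizer.nonneg (hv0 x) (hδ.le.trans (hwE x hx))
  have huD : ∀ x ∈ E, u x ≤ holderExtremizer q D δ := fun x hx =>
    holderExtremizer.le_of_le_of_le hpq.symm.lt.le (hv0 x) (hvE x hx) hδ (hwE x hx)
  have huv : ∀ x, u x * v x = v x ^ q * w x ^ (1 - q) := fun x =>
    holderExtremizer.mul_self hpq.symm.ne_zero (hv0 x)
  have huw : ∀ x ∈ E, u x ^ p * w x = v x ^ q * w x ^ (1 - q) := fun x hx =>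
    holderExtremizer.rpow_mul hpq (hv0 x) (hδ.trans_le (hwE x hx))
  have hfin : ∫⁻ x in E, ENNReal.ofReal (v x ^ q * w x ^ (1 - q)) ∂m ≠ ∞ := by
    refine (setLIntegral_lt_top_of_le_nnreal hmE
      ⟨(holderExtremizer q D δ * D).toNNReal, fun x hx => ENNReal.ofReal_le_ofReal ?_⟩).ne
    rw [← huv x]
    exact mul_le_mul (huD x hx) (hvE x hx) (hv0 x) ((hu0 x hx).trans (huD x hx))
  have htest := H (E.indicator u)
    (((hv.pow_const _).mul (hw.pow_const _)).indicator hE) (indicator_nonneg hu0)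
    ⟨max (holderExtremizer q D δ) 0, forall_mem_range.2 fun x => indicator_apply_le'
      (fun hx => le_max_of_le_left (huD x hx)) fun _ => le_max_right _ _⟩
  rw [← setLIntegral_univ, ← setLIntegral_univ (f := fun x => ENNReal.ofReal (_ ^ p * w x)),
    setLIntegral_comp_indicator (F := fun x y => ENNReal.ofReal (y * v x)) hE
      (subset_univ E) (by simp),
    setLIntegral_comp_indicator (F := fun x y => ENNReal.ofReal (y ^ p * w x)) hE
      (subset_univ E) (by simp [Real.zero_rpow hpq.ne_zero]),
    setLIntegral_congr_fun hE fun x hx => congrArg ENNReal.ofReal (huw x hx)] at htest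
  simp only [huv] at htest
  exact mul_rpow_le_of_mul_le_mul_rpow hpq hfin htest

/-- The sets `{v ≤ n, (n + 1)⁻¹ ≤ w}`, cut off to sets of finite measure: on each of them the
extremal function for Hölder's inequality is bounded, and they exhaust `{w > 0}`. -/
def boundedPart (m : Measure α) [SigmaFinite m] (v w : α → ℝ) (n : ℕ) : Set α :=
  ({x | v x ≤ n} ∩ {x | 1 / ((n : ℝ) + 1) ≤ w x}) ∩ spanningSets m n

section BoundedPart

variable [SigmaFinite m]

theorem measurableSet_boundedPart (hv : Measurable v) (hw : Measurable w) (n : ℕ) :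
    MeasurableSet (boundedPart m v w n) :=
  ((measurableSet_le hv measurable_const).inter (measurableSet_le measurable_const hw)).inter
    (measurableSet_spanningSets m n)

theorem measure_boundedPart_lt_top (n : ℕ) : m (boundedPart m v w n) < ∞ :=
  (measure_mono inter_subset_right).trans_lt (measure_spanningSets_lt_top m n)

theorem monotone_boundedPart : Monotone (boundedPart m v w) := fun _ _ hij =>
  inter_subset_inter
    (inter_subset_inter (fun _ hx => le_trans (α := ℝ) hx (Nat.cast_le.2 hij))
      fun _ hx => le_trans (α := ℝ) (Nat.one_div_le_one_div hij) hx)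
    (monotone_spanningSets m hij)

theorem iUnion_boundedPart : ⋃ n, boundedPart m v w n = {x | 0 < w x} := by
  refine subset_antisymm
    (iUnion_subset fun n x hx => lt_of_lt_of_le (α := ℝ) Nat.one_div_pos_of_nat hx.1.2)
    fun x hx => ?_
  obtain ⟨i, hi⟩ := exists_nat_ge (v x)
  obtain ⟨j, hj⟩ := exists_nat_one_div_lt (show 0 < w x from hx)
  let n := max (max i j) (spanningSetsIndex m x)
  refine mem_iUnion.2 ⟨n, ⟨?_, ?_⟩, ?_⟩
  · exact hi.trans (Nat.cast_le.2 ((le_max_left i j).trans (le_max_left _ _)))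
  · exact (Nat.one_div_le_one_div ((le_max_right i j).trans (le_max_left _ _))).trans hj.le
  · exact monotone_spanningSets m (le_max_right _ _) (mem_spanningSetsIndex m x)

end BoundedPart

theorem mul_lintegral_rpow_le_of_forall_bounded [SigmaFinite m] (hpq : p.HolderConjugate q)
    (hv : Measurable v) (hv0 : ∀ x, 0 ≤ v x) (hw : Measurable w) (hwpos : ∀ᵐ x ∂m, 0 < w x)
    (H : ∀ h : α → ℝ, Measurable h → (∀ x, 0 ≤ h x) → BddAbove (range h) →
      B * ∫⁻ x, ENNReal.ofReal (h x * v x) ∂m ≤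
        A * (∫⁻ x, ENNReal.ofReal (h x ^ p * w x) ∂m) ^ (1 / p)) :
    B * (∫⁻ x, ENNReal.ofReal (v x ^ q * w x ^ (1 - q)) ∂m) ^ (1 / q) ≤ A := by
  have hexhaust : ∫⁻ x, ENNReal.ofReal (v x ^ q * w x ^ (1 - q)) ∂m =
      ⨆ n, ∫⁻ x in boundedPart m v w n, ENNReal.ofReal (v x ^ q * w x ^ (1 - q)) ∂m := by
    have hrestrict : m.restrict {x | 0 < w x} = m := Measure.restrict_eq_self_of_ae_mem hwpos
    rw [← setLIntegral_iUnion_of_directed _ monotone_boundedPart.directed_le, iUnion_boundedPart,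
      hrestrict]
  have hrpow_iSup (I : ℕ → ℝ≥0∞) : (⨆ n, I n) ^ (1 / q) = ⨆ n, I n ^ (1 / q) :=
    (ENNReal.orderIsoRpow (1 / q) hpq.symm.one_div_pos).map_iSup I
  rw [hexhaust, hrpow_iSup, ENNReal.mul_iSup]
  exact iSup_le fun n => mul_setLIntegral_rpow_le_of_forall_bounded hpq hv hv0 hw H
    (measurableSet_boundedPart hv hw n) (measure_boundedPart_lt_top n).ne Nat.one_div_pos_of_nat
    (fun _ hx => hx.1.1) fun _ hx => hx.1.2

end ConverseHolder

/-! ### Gauge norms of functions that are large on a subinterval -/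

theorem IsYoung.monotoneOn {Φ : ℝ → ℝ} (hΦ : IsYoung Φ) : MonotoneOn Φ (Ici 0) := by
  intro s hs t _ hst
  obtain ⟨hconv, -, hzero, hnonneg, -⟩ := hΦ
  simpa [hzero, hnonneg t] using
    hconv.le_max_of_mem_Icc (mem_univ 0) (mem_univ t) (mem_Icc.2 ⟨hs, hst⟩)

theorem IsYoungInv.le_of_apply_le {Φ Φinv : ℝ → ℝ} (hinv : IsYoungInv Φ Φinv)
    (hmono : MonotoneOn Φ (Ici 0)) {z r : ℝ} (hz : 0 ≤ z) (hr : 0 ≤ r) (h : Φ z ≤ r) :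
    z ≤ Φinv r := by
  obtain ⟨hinv_nonneg, hright, hleft⟩ := hinv
  by_contra! hlt
  have hle : Φ (Φinv r) ≤ Φ z := hmono (hinv_nonneg r hr) hz hlt.le
  have heq : Φ z = r := le_antisymm h (hright r hr ▸ hle)
  rw [← heq, hleft z hz] at hlt
  exact hlt.false

theorem IsWeight.wInt_ne_zero {μ : ℝ → ℝ} {a b x y : ℝ} (hμ : IsWeight μ a b) (hxy : x < y)
    (hsub : Icc x y ⊆ Icc a b) : wInt μ x y ≠ 0 := by
  have hpos : ∀ᵐ t ∂volume.restrict (Icc x y), 0 < μ t :=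
    ae_restrict_of_ae_restrict_of_subset hsub hμ.2.2
  refine (lintegral_pos_iff_support hμ.1.ennreal_ofReal |>.2 ?_).ne'
  have hsupp : (Function.support fun t => ENNReal.ofReal (μ t))
      =ᵐ[volume.restrict (Icc x y)] univ :=
    eventuallyEq_univ.2 (hpos.mono fun t ht => by simpa using ht)
  rw [measure_congr hsupp]
  simpa using hxy

theorem inv_mul_le_luxNorm {Φ Φinv μ F : ℝ → ℝ} {a b x y m : ℝ}
    (hmono : MonotoneOn Φ (Ici 0)) (heven : Function.Even Φ) (hinv : IsYoungInv Φ Φinv)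
    (hμ : ∀ t, 0 ≤ μ t) (hsub : Icc x y ⊆ Icc a b) (hne : wInt μ x y ≠ 0) (hm : 0 ≤ m)
    (hF : ∀ t ∈ Icc x y, m ≤ |F t|) :
    (ENNReal.ofReal (Φinv (wInt μ x y).toReal⁻¹))⁻¹ * ENNReal.ofReal m ≤ luxNorm Φ μ a b F := by
  refine le_sInf ?_
  rintro _ ⟨c, hc, rfl, hmodular⟩
  have hΦF : ∀ t ∈ Icc x y, Φ (m / c) ≤ Φ (F t / c) := fun t ht => by
    have habs : Φ |F t / c| = Φ (F t / c) := by
      rcases abs_choice (F t / c) with h | h <;> simp [h, heven _]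
    rw [← habs, abs_div, abs_of_pos hc]
    exact hmono (mem_Ici.2 (by positivity)) (mem_Ici.2 (by positivity)) (by gcongr; exact hF t ht)
  have hmass : ENNReal.ofReal (Φ (m / c)) * wInt μ x y ≤ 1 := calc
    _ = ∫⁻ t in Icc x y, ENNReal.ofReal (Φ (m / c) * μ t) := by
      rw [wInt, ← lintegral_const_mul' _ _ ENNReal.ofReal_ne_top]
      simp only [ENNReal.ofReal_mul' (hμ _)]
    _ ≤ ∫⁻ t in Icc x y, ENNReal.ofReal (Φ (F t / c) * μ t) :=
      setLIntegral_mono' measurableSet_Icc fun t ht =>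
        ENNReal.ofReal_le_ofReal (mul_le_mul_of_nonneg_right (hΦF t ht) (hμ t))
    _ ≤ ∫⁻ t in Icc a b, ENNReal.ofReal (Φ (F t / c) * μ t) := lintegral_mono_set hsub
    _ ≤ 1 := hmodular
  have hΦm : Φ (m / c) ≤ (wInt μ x y).toReal⁻¹ := by
    rw [← ENNReal.toReal_inv, ← ENNReal.ofReal_le_iff_le_toReal (ENNReal.inv_ne_top.2 hne)]
    exact ENNReal.le_inv_iff_mul_le.2 hmass
  have hm_le : m ≤ Φinv (wInt μ x y).toReal⁻¹ * c := (div_le_iff₀ hc).1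
    (hinv.le_of_apply_le hmono (by positivity) (by positivity) hΦm)
  rw [mul_comm, ← div_eq_mul_inv]
  refine ENNReal.div_le_of_le_mul ?_
  rw [← ENNReal.ofReal_mul hc.le, mul_comm]
  exact ENNReal.ofReal_le_ofReal hm_le

/-! ### Primitives as test functions -/

section Triangle

variable {α : Type*} [PartialOrder α] [TopologicalSpace α] [OrderClosedTopology α]
  [SecondCountableTopology α] [MeasurableSpace α] [OpensMeasurableSpace α]

theorem lintegral_Icc_lintegral_Icc_swap (κ ν : Measure α) [SFinite κ] [SFinite ν]
    {F : α → α → ℝ≥0∞} (hF : Measurable (Function.uncurry F)) (a b : α) :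
    ∫⁻ s in Icc a b, ∫⁻ t in Icc a s, F s t ∂κ ∂ν =
      ∫⁻ t in Icc a b, ∫⁻ s in Icc t b, F s t ∂ν ∂κ := by
  have hinner : ∀ s ∈ Icc a b,
      ∫⁻ t in Icc a s, F s t ∂κ = ∫⁻ t in Icc a b, (Iic s).indicator (F s) t ∂κ := fun s hs => by
    rw [setLIntegral_indicator measurableSet_Iic]
    congr 2
    grind
  have hinner' : ∀ t ∈ Icc a b,
      ∫⁻ s in Icc a b, (Iic s).indicator (F s) t ∂ν = ∫⁻ s in Icc t b, F s t ∂ν := fun t ht => by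
    have hflip : (fun s => (Iic s).indicator (F s) t) = (Ici t).indicator fun s => F s t := rfl
    rw [hflip, setLIntegral_indicator measurableSet_Ici]
    congr 2
    grind
  have hmeas : Measurable (Function.uncurry fun s t => (Iic s).indicator (F s) t) :=
    hF.indicator (measurableSet_le measurable_snd measurable_fst)
  rw [setLIntegral_congr_fun measurableSet_Icc hinner, lintegral_lintegral_swap hmeas.aemeasurable,
    setLIntegral_congr_fun measurableSet_Icc hinner']

end Triangle

theorem LipschitzWithDeriv.neg {f f' : ℝ → ℝ} {a b : ℝ} (hf : LipschitzWithDeriv f f' a b) :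
    LipschitzWithDeriv (fun s => -f s) (fun s => -f' s) a b :=
  ⟨hf.1.imp fun _ hK => hK.neg, hf.2.mono fun _ hs => hs.neg⟩

theorem locallyIntegrable_of_forall_norm_le {X E : Type*} [TopologicalSpace X] [MeasurableSpace X]
    [NormedAddCommGroup E] {m : Measure X} [IsLocallyFiniteMeasure m] {g : X → E} {D : ℝ}
    (hg : AEStronglyMeasurable g m) (hD : ∀ x, ‖g x‖ ≤ D) : LocallyIntegrable g m :=
  (memLp_top_of_bound hg D (ae_of_all _ hD)).locallyIntegrable le_top

section Primitive

variable {g : ℝ → ℝ} {a b c d D : ℝ}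

theorem lipschitzWithDeriv_integral_right (hg : Measurable g) (hD : ∀ x, ‖g x‖ ≤ D) (a b c : ℝ) :
    LipschitzWithDeriv (fun s => ∫ t in c..s, g t) g a b := by
  have hloc : LocallyIntegrable g :=
    locallyIntegrable_of_forall_norm_le hg.aestronglyMeasurable hD
  have hint : ∀ s s', IntervalIntegrable g volume s s' := fun s s' =>
    (hloc.integrableOn_isCompact isCompact_uIcc).intervalIntegrable
  refine ⟨⟨D.toNNReal, (LipschitzWith.of_dist_le_mul fun s s' => ?_).lipschitzOnWith⟩,
    ae_restrict_of_ae ((LocallyIntegrable.ae_hasDerivAt_integral hloc).mono fun s hs => hs c)⟩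
  rw [Real.dist_eq, intervalIntegral.integral_interval_sub_left (hint _ _) (hint _ _),
    Real.coe_toNNReal D ((norm_nonneg _).trans (hD 0)), Real.dist_eq]
  exact intervalIntegral.norm_integral_le_of_norm_le_const fun x _ => hD x

theorem lipschitzWithDeriv_integral_left (hg : Measurable g) (hD : ∀ x, ‖g x‖ ≤ D) (a b c : ℝ) :
    LipschitzWithDeriv (fun s => ∫ t in s..c, g t) (fun t => -g t) a b := by
  simp only [intervalIntegral.integral_symm c]
  exact (lipschitzWithDeriv_integral_right hg hD a b c).neg

theorem ofReal_intervalIntegral (hg : LocallyIntegrable g) (hg0 : ∀ x, 0 ≤ g x) (hcd : c ≤ d) :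
    ENNReal.ofReal (∫ t in c..d, g t) = ∫⁻ t in Icc c d, ENNReal.ofReal (g t) := by
  rw [intervalIntegral.integral_of_le hcd, ← integral_Icc_eq_integral_Ioc,
    ofReal_integral_eq_lintegral_ofReal (hg.integrableOn_isCompact isCompact_Icc)
      (ae_of_all _ hg0)]

variable (ν : Measure ℝ) [IsLocallyFiniteMeasure ν]

theorem lintegral_integral_right (hg : Measurable g) (hloc : LocallyIntegrable g)
    (hg0 : ∀ x, 0 ≤ g x) :
    ∫⁻ s in Icc a b, ENNReal.ofReal (∫ t in a..s, g t) ∂ν =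
      ∫⁻ t in Icc a b, ENNReal.ofReal (g t * (ν (Icc t b)).toReal) := by
  rw [setLIntegral_congr_fun measurableSet_Icc fun s hs => ofReal_intervalIntegral hloc hg0 hs.1,
    lintegral_Icc_lintegral_Icc_swap volume ν (F := fun _ t => ENNReal.ofReal (g t))
      (hg.comp measurable_snd).ennreal_ofReal]
  simp [ENNReal.ofReal_mul (hg0 _), measure_Icc_lt_top.ne]

theorem lintegral_integral_left (hg : Measurable g) (hloc : LocallyIntegrable g)
    (hg0 : ∀ x, 0 ≤ g x) :
    ∫⁻ s in Icc a b, ENNReal.ofReal (∫ t in s..b, g t) ∂ν =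
      ∫⁻ t in Icc a b, ENNReal.ofReal (g t * (ν (Icc a t)).toReal) := by
  rw [setLIntegral_congr_fun measurableSet_Icc fun s hs => ofReal_intervalIntegral hloc hg0 hs.2,
    ← lintegral_Icc_lintegral_Icc_swap ν volume (F := fun t _ => ENNReal.ofReal (g t))
      (hg.comp measurable_fst).ennreal_ofReal]
  simp [ENNReal.ofReal_mul (hg0 _), measure_Icc_lt_top.ne]

end Primitive

theorem lpNorm_indicator {w h : ℝ → ℝ} {p a b : ℝ} {S : Set ℝ} (hp : p ≠ 0)
    (hS : MeasurableSet S) (hSab : S ⊆ Icc a b) (hh : ∀ t, 0 ≤ h t) :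
    lpNorm w p a b (S.indicator h) = (∫⁻ t in S, ENNReal.ofReal (h t ^ p * w t)) ^ (1 / p) := by
  rw [_root_.lpNorm, setLIntegral_comp_indicator (F := fun t y => ENNReal.ofReal (|y| ^ p * w t)) hS
    hSab (by simp [Real.zero_rpow hp])]
  simp only [abs_of_nonneg (hh _)]

theorem lpNorm_neg (w g : ℝ → ℝ) (p a b : ℝ) :
    lpNorm w p a b (fun t => -g t) = lpNorm w p a b g := by
  simp only [_root_.lpNorm, abs_neg]

/-! ### The Orlicz–Poincaré inequality and the Muckenhoupt constant -/

/-- The `(Φ, p)` Orlicz–Poincaré inequality on `[a, b]` with constant `C`, for gradients in `L^p_w`,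
means taken with respect to `ν` and oscillation measured in the gauge norm of `L^Φ_μ`. -/
def OrliczPoincare (Φ μ w : ℝ → ℝ) (ν : Measure ℝ) (p a b C : ℝ) : Prop :=
  ∀ f f' : ℝ → ℝ, LipschitzWithDeriv f f' a b →
    luxNorm Φ μ a b (fun x => f x - (ν (Icc a b)).toReal⁻¹ * ∫ y in Icc a b, f y ∂ν)
      ≤ ENNReal.ofReal C * lpNorm w p a b f'

/-- The Muckenhoupt-type constant `K̃_{p,Φ}(μ,ν,w)`, as a function of the inverse `Φinv` of `Φ` on
`[0, ∞)` and of the exponent `q` conjugate to `p`. -/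
def orliczMuckenhoupt (Φinv μ w : ℝ → ℝ) (ν : Measure ℝ) (q a b : ℝ) : ℝ≥0∞ :=
  (ν (Icc a b))⁻¹ *
    ((⨆ x ∈ Ioo a b, (ENNReal.ofReal (Φinv (wInt μ x b).toReal⁻¹))⁻¹ *
        (∫⁻ t in Icc a x,
          ENNReal.ofReal ((ν (Icc a t)).toReal ^ q * w t ^ (1 - q))) ^ (1 / q)) +
      (⨆ x ∈ Ioo a b, (ENNReal.ofReal (Φinv (wInt μ a x).toReal⁻¹))⁻¹ *
        (∫⁻ t in Icc x b,
          ENNReal.ofReal ((ν (Icc t b)).toReal ^ q * w t ^ (1 - q))) ^ (1 / q)))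

namespace OrliczPoincare

variable {Φ Φinv μ w : ℝ → ℝ} {ν : Measure ℝ} [IsLocallyFiniteMeasure ν] {p q a b C x : ℝ}

theorem mul_lintegral_le {f f' : ℝ → ℝ} {y : ℝ} (hP : OrliczPoincare Φ μ w ν p a b C)
    (hmono : MonotoneOn Φ (Ici 0)) (heven : Function.Even Φ) (hinv : IsYoungInv Φ Φinv)
    (hμ : IsWeight μ a b) (hν : ν (Icc a b) ≠ 0) (hxy : x < y) (hsub : Icc x y ⊆ Icc a b)
    (hf : LipschitzWithDeriv f f' a b) (hf0 : ∀ s ∈ Icc a b, 0 ≤ f s)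
    (hfxy : ∀ s ∈ Icc x y, f s = 0) :
    (ν (Icc a b))⁻¹ * (ENNReal.ofReal (Φinv (wInt μ x y).toReal⁻¹))⁻¹ *
        ∫⁻ s in Icc a b, ENNReal.ofReal (f s) ∂ν ≤ ENNReal.ofReal C * lpNorm w p a b f' := by
  have hν_top : ν (Icc a b) ≠ ∞ := measure_Icc_lt_top.ne
  have hint : IntegrableOn f (Icc a b) ν :=
    hf.1.choose_spec.continuousOn.integrableOn_compact isCompact_Icc
  have hmean : 0 ≤ (ν (Icc a b)).toReal⁻¹ * ∫ s in Icc a b, f s ∂ν :=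
    mul_nonneg (by positivity) (setIntegral_nonneg measurableSet_Icc hf0)
  have hlower := inv_mul_le_luxNorm (a := a) (b := b) hmono heven hinv hμ.2.1 hsub
    (hμ.wInt_ne_zero hxy hsub) hmean
    (F := fun s => f s - (ν (Icc a b)).toReal⁻¹ * ∫ y in Icc a b, f y ∂ν)
    fun s hs => by rw [hfxy s hs, zero_sub, abs_neg]; exact le_abs_self _
  rw [ENNReal.ofReal_mul (by positivity),
    ENNReal.ofReal_inv_of_pos (ENNReal.toReal_pos hν hν_top), ENNReal.ofReal_toReal hν_top,
    ofReal_integral_eq_lintegral_ofReal hint (ae_restrict_of_forall_mem measurableSet_Icc hf0),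
    ← mul_assoc, mul_comm _ (ν (Icc a b))⁻¹] at hlower
  exact hlower.trans (hP f f' hf)

theorem left_term_le (hP : OrliczPoincare Φ μ w ν p a b C) (hpq : p.HolderConjugate q)
    (hmono : MonotoneOn Φ (Ici 0)) (heven : Function.Even Φ) (hinv : IsYoungInv Φ Φinv)
    (hμ : IsWeight μ a b) (hw : IsWeight w a b) (hν : ν (Icc a b) ≠ 0) (hx : x ∈ Ioo a b) :
    (ν (Icc a b))⁻¹ * (ENNReal.ofReal (Φinv (wInt μ x b).toReal⁻¹))⁻¹ *
        (∫⁻ t in Icc a x, ENNReal.ofReal ((ν (Icc a t)).toReal ^ q * w t ^ (1 - q))) ^ (1 / q) ≤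
      ENNReal.ofReal C := by
  have hsub : Icc a x ⊆ Icc a b := Icc_subset_Icc_right hx.2.le
  have hν_mono : Monotone fun t => (ν (Icc a t)).toReal := fun s t hst =>
    ENNReal.toReal_mono measure_Icc_lt_top.ne (measure_mono (Icc_subset_Icc_right hst))
  refine mul_lintegral_rpow_le_of_forall_bounded hpq hν_mono.measurable
    (fun _ => ENNReal.toReal_nonneg) hw.1 (ae_restrict_of_ae_restrict_of_subset hsub hw.2.2) ?_
  rintro h hh hh0 ⟨D, hD⟩
  set g := (Icc a x).indicator h
  have hg : Measurable g := hh.indicator measurableSet_Icc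
  have hg0 : ∀ t, 0 ≤ g t := indicator_nonneg fun t _ => hh0 t
  have hgD : ∀ t, ‖g t‖ ≤ D := fun t => (Real.norm_of_nonneg (hg0 t)).trans_le <|
    (indicator_le_self' (fun s _ => hh0 s) t).trans (hD (mem_range_self t))
  have hloc : LocallyIntegrable g :=
    locallyIntegrable_of_forall_norm_le hg.aestronglyMeasurable hgD
  have htest := hP.mul_lintegral_le hmono heven hinv hμ hν hx.2 (Icc_subset_Icc_left hx.1.le)
    (lipschitzWithDeriv_integral_left hg hgD a b b)
    (fun s hs => intervalIntegral.integral_nonneg hs.2 fun t _ => hg0 t)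
    fun s hs => ?_
  · rwa [lintegral_integral_left ν hg hloc hg0,
      setLIntegral_comp_indicator (F := fun t y => ENNReal.ofReal (y * (ν (Icc a t)).toReal))
        measurableSet_Icc hsub (by simp),
      lpNorm_neg, lpNorm_indicator hpq.ne_zero measurableSet_Icc hsub hh0] at htest
  · rw [intervalIntegral.integral_of_le hs.2]
    exact setIntegral_eq_zero_of_forall_eq_zero fun t ht =>
      indicator_of_notMem (fun htx => (hs.1.trans_lt ht.1).not_ge htx.2) h

theorem right_term_le (hP : OrliczPoincare Φ μ w ν p a b C) (hpq : p.HolderConjugate q)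
    (hmono : MonotoneOn Φ (Ici 0)) (heven : Function.Even Φ) (hinv : IsYoungInv Φ Φinv)
    (hμ : IsWeight μ a b) (hw : IsWeight w a b) (hν : ν (Icc a b) ≠ 0) (hx : x ∈ Ioo a b) :
    (ν (Icc a b))⁻¹ * (ENNReal.ofReal (Φinv (wInt μ a x).toReal⁻¹))⁻¹ *
        (∫⁻ t in Icc x b, ENNReal.ofReal ((ν (Icc t b)).toReal ^ q * w t ^ (1 - q))) ^ (1 / q) ≤
      ENNReal.ofReal C := by
  have hsub : Icc x b ⊆ Icc a b := Icc_subset_Icc_left hx.1.le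
  have hν_anti : Antitone fun t => (ν (Icc t b)).toReal := fun s t hst =>
    ENNReal.toReal_mono measure_Icc_lt_top.ne (measure_mono (Icc_subset_Icc_left hst))
  refine mul_lintegral_rpow_le_of_forall_bounded hpq hν_anti.measurable
    (fun _ => ENNReal.toReal_nonneg) hw.1 (ae_restrict_of_ae_restrict_of_subset hsub hw.2.2) ?_
  rintro h hh hh0 ⟨D, hD⟩
  set g := (Icc x b).indicator h
  have hg : Measurable g := hh.indicator measurableSet_Icc
  have hg0 : ∀ t, 0 ≤ g t := indicator_nonneg fun t _ => hh0 t
  have hgD : ∀ t, ‖g t‖ ≤ D := fun t => (Real.norm_of_nonneg (hg0 t)).trans_le <|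
    (indicator_le_self' (fun s _ => hh0 s) t).trans (hD (mem_range_self t))
  have hloc : LocallyIntegrable g :=
    locallyIntegrable_of_forall_norm_le hg.aestronglyMeasurable hgD
  have htest := hP.mul_lintegral_le hmono heven hinv hμ hν hx.1 (Icc_subset_Icc_right hx.2.le)
    (lipschitzWithDeriv_integral_right hg hgD a b a)
    (fun s hs => intervalIntegral.integral_nonneg hs.1 fun t _ => hg0 t)
    fun s hs => ?_
  · rwa [lintegral_integral_right ν hg hloc hg0,
      setLIntegral_comp_indicator (F := fun t y => ENNReal.ofReal (y * (ν (Icc t b)).toReal))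
        measurableSet_Icc hsub (by simp),
      lpNorm_indicator hpq.ne_zero measurableSet_Icc hsub hh0] at htest
  · rw [intervalIntegral.integral_of_le hs.1, integral_Ioc_eq_integral_Ioo]
    exact setIntegral_eq_zero_of_forall_eq_zero fun t ht =>
      indicator_of_notMem (fun htx => (ht.2.trans_le hs.2).not_ge htx.1) h

end OrliczPoincare

theorem orlicz_poincare_p_gt_one_necessary_general {Φ Φinv μ w : ℝ → ℝ} {ν : Measure ℝ}
    [IsLocallyFiniteMeasure ν] {p q a b C : ℝ} (hpq : p.HolderConjugate q)
    (hmono : MonotoneOn Φ (Ici 0)) (heven : Function.Even Φ) (hinv : IsYoungInv Φ Φinv)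
    (hμ : IsWeight μ a b) (hw : IsWeight w a b) (hν : ν (Icc a b) ≠ 0)
    (hP : OrliczPoincare Φ μ w ν p a b C) :
    orliczMuckenhoupt Φinv μ w ν q a b ≤ ENNReal.ofReal (2 * C) := by
  have htwo : ENNReal.ofReal (2 * C) = ENNReal.ofReal C + ENNReal.ofReal C := by
    rw [ENNReal.ofReal_mul zero_le_two, ENNReal.ofReal_ofNat, two_mul]
  simp only [orliczMuckenhoupt, htwo, mul_add, ENNReal.mul_iSup, ← mul_assoc]
  exact add_le_add (iSup₂_le fun x hx => hP.left_term_le hpq hmono heven hinv hμ hw hν hx)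
    (iSup₂_le fun x hx => hP.right_term_le hpq hmono heven hinv hμ hw hν hx)

/-- Necessity: if the `(Φ,p)` Orlicz–Poincaré inequality holds with constant `C` (`p > 1`),
then `K̃_{p,Φ}(μ,ν,w) ≤ 2C` (in particular it is finite). -/
theorem orlicz_poincare_p_gt_one_necessary
    (a b : ℝ) (hab : a < b) (p pc : ℝ) (hp : 1 < p) (hpc : pc = p / (p - 1))
    (Φ Φinv μ w : ℝ → ℝ)
    (hΦ : IsYoung Φ) (hinv : IsYoungInv Φ Φinv)
    (hμ : IsWeight μ a b) (hw : IsWeight w a b)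
    (ν : Measure ℝ) [IsFiniteMeasure ν] (hν : 0 < ν (Set.Icc a b))
    (C : ℝ)
    (hP : ∀ f f' : ℝ → ℝ, LipschitzWithDeriv f f' a b →
      luxNorm Φ μ a b
        (fun x => f x - (ν (Set.Icc a b)).toReal⁻¹ * ∫ y in Set.Icc a b, f y ∂ν)
        ≤ ENNReal.ofReal C * lpNorm w p a b f')
    (Kt : ℝ≥0∞)
    (hKt : Kt = (ν (Set.Icc a b))⁻¹ *
      ((⨆ x ∈ Set.Ioo a b,
          (ENNReal.ofReal (Φinv ((wInt μ x b).toReal⁻¹)))⁻¹ *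
            (∫⁻ t in Set.Icc a x,
              ENNReal.ofReal ((ν (Set.Icc a t)).toReal ^ pc * w t ^ (1 - pc))) ^ (1 / pc)) +
        (⨆ x ∈ Set.Ioo a b,
          (ENNReal.ofReal (Φinv ((wInt μ a x).toReal⁻¹)))⁻¹ *
            (∫⁻ t in Set.Icc x b,
              ENNReal.ofReal ((ν (Set.Icc t b)).toReal ^ pc * w t ^ (1 - pc))) ^ (1 / pc)))) :
    Kt ≤ ENNReal.ofReal (2 * C) := by
  rw [hKt]
  exact orlicz_poincare_p_gt_one_necessary_general
    ((Real.holderConjugate_iff_eq_conjExponent hp).2 hpc) hΦ.monotoneOn hΦ.2.1 hinv hμ hw hν.ne' hP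
end
end

section
/- Let Φ be a Young function, let μ be a σ-finite measure on a measurable space Ω, and let F : Ω × ℝ → ℝ be a measurable function. Then ‖ ∫_ℝ F(·, t) dt ‖_{L_μ^Φ} ≤ 2 · ∫_ℝ ‖ F(·, t) ‖_{L_μ^Φ} dt, where the gauge norm is taken in the variable on Ω (generalized Minkowski inequality for the gauge norm). -/
open MeasureTheory Set Filter
open scoped ENNReal NNReal

noncomputable section

/-!
If `N t` is the gauge norm of `F (·, t)` and `c` is a real number above `∫ N`, choose a measurable
`p` with `N < p` almost everywhere and `∫ p ≤ c`. Then `∫ F (ω, t) / c = ∫ F (ω, t) / p t · p t / c`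
is an integral against the sub-probability measure with density `p / c`, so Jensen's inequality
followed by Tonelli's theorem bounds the modular of `∫ F (·, t) / c` by `1`.
-/

lemma map_smul_le_smul_of_le_one {E : Type*} [AddCommMonoid E] [Module ℝ E] {Φ : E → ℝ}
    (hconv : ConvexOn ℝ univ Φ) (hzero : Φ 0 = 0) {a : ℝ} (ha₀ : 0 ≤ a) (ha₁ : a ≤ 1) (x : E) :
    Φ (a • x) ≤ a • Φ x := by
  simpa [hzero] using
    hconv.2 (mem_univ x) (mem_univ 0) ha₀ (sub_nonneg.2 ha₁) (add_sub_cancel a 1)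

section Jensen

variable {α E : Type*} [MeasurableSpace α] {ν : Measure α} [NormedAddCommGroup E] [NormedSpace ℝ E]
  [CompleteSpace E] {Φ : E → ℝ}

lemma map_integral_le_integral_of_measure_univ_le_one (hconv : ConvexOn ℝ univ Φ)
    (hcont : Continuous Φ) (hzero : Φ 0 = 0) (hν : ν univ ≤ 1) {f : α → E} (hf : Integrable f ν)
    (hΦf : Integrable (fun t => Φ (f t)) ν) : Φ (∫ t, f t ∂ν) ≤ ∫ t, Φ (f t) ∂ν := by
  obtain rfl | _ := eq_zero_or_neZero ν
  · simp [hzero]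
  have : IsFiniteMeasure ν := ⟨hν.trans_lt ENNReal.one_lt_top⟩
  have hmass : ν.real univ ≤ 1 := ENNReal.toReal_le_of_le_ofReal zero_le_one (by simpa using hν)
  calc Φ (∫ t, f t ∂ν)
      = Φ (ν.real univ • ⨍ t, f t ∂ν) := by rw [measure_smul_average]
    _ ≤ ν.real univ • Φ (⨍ t, f t ∂ν) :=
        map_smul_le_smul_of_le_one hconv hzero measureReal_nonneg hmass _
    _ ≤ ν.real univ • ⨍ t, Φ (f t) ∂ν := by
        gcongr
        exact hconv.map_average_le hcont.continuousOn isClosed_univ (by simp) hf hΦf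
    _ = ∫ t, Φ (f t) ∂ν := measure_smul_average ν _

-- For non-integrable `f` the left-hand side is the junk value `Φ 0 = 0`.
lemma ofReal_map_integral_le_lintegral (hconv : ConvexOn ℝ univ Φ) (hcont : Continuous Φ)
    (hzero : Φ 0 = 0) (hnonneg : ∀ x, 0 ≤ Φ x) (hν : ν univ ≤ 1) (f : α → E) :
    ENNReal.ofReal (Φ (∫ t, f t ∂ν)) ≤ ∫⁻ t, ENNReal.ofReal (Φ (f t)) ∂ν := by
  by_cases hf : Integrable f ν
  swap
  · simp [integral_undef hf, hzero]
  have hnonneg_ae : ∀ᵐ t ∂ν, 0 ≤ Φ (f t) := ae_of_all _ fun t => hnonneg (f t)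
  by_cases hΦf : Integrable (fun t => Φ (f t)) ν
  · rw [← ofReal_integral_eq_lintegral_ofReal hΦf hnonneg_ae]
    exact ENNReal.ofReal_le_ofReal
      (map_integral_le_integral_of_measure_univ_le_one hconv hcont hzero hν hf hΦf)
  · have hmeas : AEStronglyMeasurable (fun t => Φ (f t)) ν :=
      hcont.comp_aestronglyMeasurable hf.aestronglyMeasurable
    have htop : ∫⁻ t, ENNReal.ofReal (Φ (f t)) ∂ν = ∞ := by
      simpa using mt (lintegral_ofReal_ne_top_iff_integrable hmeas hnonneg_ae).1 hΦf
    exact htop ▸ le_top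

lemma ofReal_map_integral_le_lintegral_withDensity (hconv : ConvexOn ℝ univ Φ)
    (hcont : Continuous Φ) (hzero : Φ 0 = 0) (hnonneg : ∀ x, 0 ≤ Φ x) {w : α → ℝ≥0}
    (hw : Measurable w) (hw₀ : ∀ᵐ t ∂ν, w t ≠ 0) (hw₁ : ∫⁻ t, w t ∂ν ≤ 1) (f : α → E) :
    ENNReal.ofReal (Φ (∫ t, f t ∂ν)) ≤
      ∫⁻ t, ENNReal.ofReal (Φ ((w t)⁻¹ • f t)) ∂ν.withDensity (fun t => w t) := by
  have hint : ∫ t, f t ∂ν = ∫ t, (w t)⁻¹ • f t ∂ν.withDensity (fun t => w t) := by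
    rw [integral_withDensity_eq_integral_smul hw]
    refine integral_congr_ae ?_
    filter_upwards [hw₀] with t ht
    rw [smul_inv_smul₀ ht]
  rw [hint]
  exact ofReal_map_integral_le_lintegral hconv hcont hzero hnonneg (by simpa using hw₁) _

end Jensen

lemma exists_measurable_gt_lintegral_lt {α : Type*} [MeasurableSpace α] {ν : Measure α}
    [SigmaFinite ν] {f : α → ℝ≥0∞} (hf : Measurable f) {c : ℝ≥0∞} (hc : ∫⁻ t, f t ∂ν < c) :
    ∃ p : α → ℝ≥0, Measurable p ∧ (∀ᵐ t ∂ν, f t < p t) ∧ ∫⁻ t, p t ∂ν < c := by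
  obtain ⟨g, hg_pos, hg, hg_lt⟩ := exists_pos_lintegral_lt_of_sigmaFinite ν (tsub_pos_of_lt hc).ne'
  refine ⟨fun t => (f t).toNNReal + g t, hf.ennreal_toNNReal.add hg, ?_, ?_⟩
  · filter_upwards [ae_lt_top hf hc.ne_top] with t ht
    rw [ENNReal.coe_add, ENNReal.coe_toNNReal ht.ne]
    exact ENNReal.lt_add_right ht.ne (by simpa using (hg_pos t).ne')
  · calc ∫⁻ t, ((f t).toNNReal + g t : ℝ≥0) ∂ν
        ≤ ∫⁻ t, f t + g t ∂ν := by
          gcongr with t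
          rw [ENNReal.coe_add]
          gcongr
          exact ENNReal.coe_toNNReal_le_self
      _ = ∫⁻ t, f t ∂ν + ∫⁻ t, g t ∂ν := lintegral_add_left hf _
      _ < c := lt_tsub_iff_left.1 hg_lt

section GaugeNorm

variable {Ω : Type*} [MeasurableSpace Ω] {Φ : ℝ → ℝ} {μ : Measure Ω}

lemma luxNormGen_le_ofReal {f : Ω → ℝ} {c : ℝ} (hc : 0 < c)
    (h : ∫⁻ ω, ENNReal.ofReal (Φ (f ω / c)) ∂μ ≤ 1) : luxNormGen Φ μ f ≤ ENNReal.ofReal c :=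
  sInf_le ⟨c, hc, rfl, h⟩

lemma map_div_le_map_div_of_le (hconv : ConvexOn ℝ univ Φ) (hzero : Φ 0 = 0)
    (hnonneg : ∀ x, 0 ≤ Φ x) {c k : ℝ} (hc : 0 < c) (hck : c ≤ k) (x : ℝ) :
    Φ (x / k) ≤ Φ (x / c) := by
  have hk : 0 < k := hc.trans_le hck
  have hratio : c / k ≤ 1 := (div_le_one hk).2 hck
  calc Φ (x / k) = Φ ((c / k) • (x / c)) := by rw [smul_eq_mul, div_mul_div_cancel₀' hc.ne']
    _ ≤ (c / k) • Φ (x / c) := map_smul_le_smul_of_le_one hconv hzero (by positivity) hratio _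
    _ ≤ Φ (x / c) := mul_le_of_le_one_left (hnonneg _) hratio

lemma lintegral_le_one_of_luxNormGen_lt_s5 (hconv : ConvexOn ℝ univ Φ) (hzero : Φ 0 = 0)
    (hnonneg : ∀ x, 0 ≤ Φ x) {f : Ω → ℝ} {k : ℝ} (hk : luxNormGen Φ μ f < ENNReal.ofReal k) :
    ∫⁻ ω, ENNReal.ofReal (Φ (f ω / k)) ∂μ ≤ 1 := by
  obtain ⟨_, ⟨c, hc, rfl, hmod⟩, hck⟩ := sInf_lt_iff.1 hk
  refine le_trans ?_ hmod
  gcongr with ω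
  exact map_div_le_map_div_of_le hconv hzero hnonneg hc (ENNReal.ofReal_lt_ofReal_iff'.1 hck).1.le _

lemma luxNormGen_lt_iff_exists_rat (hconv : ConvexOn ℝ univ Φ) (hzero : Φ 0 = 0)
    (hnonneg : ∀ x, 0 ≤ Φ x) {f : Ω → ℝ} {a : ℝ≥0∞} :
    luxNormGen Φ μ f < a ↔ ∃ q : ℚ, (0 < q ∧ ENNReal.ofReal q < a) ∧
      ∫⁻ ω, ENNReal.ofReal (Φ (f ω / q)) ∂μ ≤ 1 := by
  constructor
  · intro h
    obtain ⟨q, -, hfq, hqa⟩ := ENNReal.lt_iff_exists_rat_btwn.1 h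
    have hq : (0 : ℝ) < q := ENNReal.ofReal_pos.1 (pos_of_gt hfq)
    exact ⟨q, ⟨mod_cast hq, hqa⟩, lintegral_le_one_of_luxNormGen_lt_s5 hconv hzero hnonneg hfq⟩
  · rintro ⟨q, ⟨hq, hqa⟩, hmod⟩
    exact (luxNormGen_le_ofReal (mod_cast hq) hmod).trans_lt hqa

variable {T : Type*} [MeasurableSpace T] {ν : Measure T} {F : Ω × T → ℝ} [SFinite μ]

lemma measurable_luxNormGen_prodMk_right (hconv : ConvexOn ℝ univ Φ) (hzero : Φ 0 = 0)
    (hnonneg : ∀ x, 0 ≤ Φ x) (hF : Measurable F) :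
    Measurable fun t => luxNormGen Φ μ fun ω => F (ω, t) := by
  have hcont : Continuous Φ := hconv.locallyLipschitz.continuous
  refine measurable_of_Iio fun a => ?_
  have hmodular (q : ℚ) : Measurable fun t => ∫⁻ ω, ENNReal.ofReal (Φ (F (ω, t) / q)) ∂μ :=
    Measurable.lintegral_prod_left' (f := fun z => ENNReal.ofReal (Φ (F z / q)))
      (hcont.measurable.comp (hF.div_const _)).ennreal_ofReal
  simp only [preimage, mem_Iio, luxNormGen_lt_iff_exists_rat hconv hzero hnonneg, ofPred_exists]
  exact .iUnion fun q =>
    (MeasurableSet.const _).inter (measurableSet_le (hmodular q) measurable_const)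

lemma lintegral_map_integral_le_one_of_weight (hconv : ConvexOn ℝ univ Φ) (hzero : Φ 0 = 0)
    (hnonneg : ∀ x, 0 ≤ Φ x) (hF : Measurable F) {w : T → ℝ≥0} (hw : Measurable w)
    (hw₀ : ∀ᵐ t ∂ν, w t ≠ 0) (hw₁ : ∫⁻ t, w t ∂ν ≤ 1)
    (hmod : ∀ᵐ t ∂ν, ∫⁻ ω, ENNReal.ofReal (Φ (F (ω, t) / w t)) ∂μ ≤ 1) :
    ∫⁻ ω, ENNReal.ofReal (Φ (∫ t, F (ω, t) ∂ν)) ∂μ ≤ 1 := by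
  have hcont : Continuous Φ := hconv.locallyLipschitz.continuous
  set ρ : Measure T := ν.withDensity fun t => w t with hρ
  have hmass : ρ univ ≤ 1 := by simpa [hρ] using hw₁
  have : IsFiniteMeasure ρ := ⟨hmass.trans_lt ENNReal.one_lt_top⟩
  have hmeas : Measurable fun z : Ω × T => ENNReal.ofReal (Φ (F z / w z.2)) :=
    (hcont.measurable.comp (hF.div (hw.comp measurable_snd).coe_nnreal_real)).ennreal_ofReal
  have hjensen (ω : Ω) : ENNReal.ofReal (Φ (∫ t, F (ω, t) ∂ν)) ≤
      ∫⁻ t, ENNReal.ofReal (Φ (F (ω, t) / w t)) ∂ρ := by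
    simpa [NNReal.smul_def, div_eq_inv_mul] using ofReal_map_integral_le_lintegral_withDensity
      hconv hcont hzero hnonneg hw hw₀ hw₁ fun t => F (ω, t)
  calc ∫⁻ ω, ENNReal.ofReal (Φ (∫ t, F (ω, t) ∂ν)) ∂μ
      ≤ ∫⁻ ω, ∫⁻ t, ENNReal.ofReal (Φ (F (ω, t) / w t)) ∂ρ ∂μ := lintegral_mono hjensen
    _ = ∫⁻ t, ∫⁻ ω, ENNReal.ofReal (Φ (F (ω, t) / w t)) ∂μ ∂ρ :=
        lintegral_lintegral_swap hmeas.aemeasurable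
    _ ≤ ∫⁻ _, 1 ∂ρ := lintegral_mono_ae ((withDensity_absolutelyContinuous ν _).ae_le hmod)
    _ ≤ 1 := by simpa using hmass

lemma luxNormGen_integral_le_of_luxNormGen_lt (hconv : ConvexOn ℝ univ Φ) (hzero : Φ 0 = 0)
    (hnonneg : ∀ x, 0 ≤ Φ x) (hF : Measurable F) {p : T → ℝ≥0} (hp : Measurable p)
    (hFp : ∀ᵐ t ∂ν, luxNormGen Φ μ (fun ω => F (ω, t)) < p t)
    {c : ℝ≥0} (hc : c ≠ 0) (hpc : ∫⁻ t, p t ∂ν ≤ c) :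
    luxNormGen Φ μ (fun ω => ∫ t, F (ω, t) ∂ν) ≤ c := by
  rw [← ENNReal.ofReal_coe_nnreal]
  refine luxNormGen_le_ofReal (by positivity) ?_
  simp only [← integral_div]
  refine lintegral_map_integral_le_one_of_weight (w := fun t => p t / c) hconv hzero hnonneg
    (hF.div_const _) (hp.div_const _) ?_ ?_ ?_
  · filter_upwards [hFp] with t ht
    exact div_ne_zero (by simpa using ht.ne_bot) hc
  · simp only [ENNReal.coe_div hc, ENNReal.div_eq_inv_mul]
    rw [lintegral_const_mul _ hp.coe_nnreal_ennreal, ← ENNReal.div_eq_inv_mul]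
    exact ENNReal.div_le_of_le_mul (by simpa using hpc)
  · filter_upwards [hFp] with t ht
    rw [← ENNReal.ofReal_coe_nnreal] at ht
    have hcancel (ω : Ω) : F (ω, t) / c / (p t / c : ℝ≥0) = F (ω, t) / p t := by
      rw [NNReal.coe_div, div_div_div_cancel_right₀ (by positivity)]
    simpa only [hcancel] using lintegral_le_one_of_luxNormGen_lt_s5 hconv hzero hnonneg ht

end GaugeNorm

theorem gauge_norm_minkowski_general {Ω T : Type*} [MeasurableSpace Ω] [MeasurableSpace T]
    {Φ : ℝ → ℝ} (hconv : ConvexOn ℝ univ Φ) (hzero : Φ 0 = 0) (hnonneg : ∀ x, 0 ≤ Φ x)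
    {μ : Measure Ω} [SFinite μ] {ν : Measure T} [SigmaFinite ν] {F : Ω × T → ℝ}
    (hF : Measurable F) :
    luxNormGen Φ μ (fun ω => ∫ t, F (ω, t) ∂ν) ≤
      ∫⁻ t, luxNormGen Φ μ (fun ω => F (ω, t)) ∂ν := by
  have hmeas : Measurable fun t => luxNormGen Φ μ fun ω => F (ω, t) :=
    measurable_luxNormGen_prodMk_right hconv hzero hnonneg hF
  refine le_of_forall_gt_imp_ge_of_dense fun b hb => ?_
  obtain ⟨c, hFc, hcb⟩ := ENNReal.lt_iff_exists_nnreal_btwn.1 hb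
  obtain ⟨p, hp, hFp, hpc⟩ := exists_measurable_gt_lintegral_lt hmeas hFc
  have hc : c ≠ 0 := by simpa using hFc.ne_bot
  exact (luxNormGen_integral_le_of_luxNormGen_lt hconv hzero hnonneg hF hp hFp hc
    hpc.le).trans hcb.le

/-- Generalized Minkowski integral inequality for the gauge norm. -/
theorem gauge_norm_minkowski
    {Ω : Type*} [MeasurableSpace Ω] (Φ : ℝ → ℝ) (hΦ : IsYoung Φ)
    (μ : Measure Ω) [SigmaFinite μ] (F : Ω × ℝ → ℝ) (hF : Measurable F) :
    luxNormGen Φ μ (fun ω => ∫ t : ℝ, F (ω, t))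
      ≤ 2 * ∫⁻ t : ℝ, luxNormGen Φ μ (fun ω => F (ω, t)) := by
  obtain ⟨hconv, -, hzero, hnonneg, -⟩ := hΦ
  exact (gauge_norm_minkowski_general hconv hzero hnonneg hF).trans
    (le_mul_of_one_le_left zero_le one_le_two)
end
end
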